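/- Adopt the setup in the context, and suppose A, B, C ∈ Σ_k* are nonempty words whose lengths are multiples of a, such that A has no leading zeros, γ_j(ABC) = γ, and δ(1, A) = δ(1, AB) = δ(1, ABC). Then for every integer m ≥ 1, γ_j(AB^mC) = γ, where AB^mC denotes the concatenation of A, m copies of B, and C. -/

import Mathlib

open Filter

/-- The finset of all words of length `n` over the alphabet `Σ_k = {0, …, k-1}`,
represented as lists of natural numbers (most significant digit first). -/
def kwords (k n : ℕ) : Finset (List ℕ) :=
  Finset.image (fun g : Fin n → Fin k => List.ofFn (fun i => (g i : ℕ))) Finset.univ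

/-- `wordVal k w` is `[w]_k`, the natural number obtained by evaluating the word `w`
as a base-`k` numeral (most significant digit first), with `[ε]_k = 0`. -/
def wordVal (k : ℕ) (w : List ℕ) : ℕ := w.foldl (fun acc d => k * acc + d) 0

/-- `sWord k g w = ∑_{v ≺ w, |v| = |w|} g v`, where `≺` is the lexicographic (equivalently,
numeric-value) strict order on words of equal length over `Σ_k`. -/
def sWord (k : ℕ) (g : List ℕ → ℚ) (w : List ℕ) : ℚ :=
  ∑ v ∈ (kwords k w.length).filter (fun v => wordVal k v < wordVal k w), g v

/-- The filter of words `w` over `Σ_k` with `|w| ≡ j (mod a)`, as `|w| → ∞`. -/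
def wordFilter (k a j : ℕ) : Filter (List ℕ) :=
  (Filter.atTop.comap List.length) ⊓
    Filter.principal {w : List ℕ | (∀ x ∈ w, x < k) ∧ w.length % a = j}

/-- `gammaJ k a j s u` is `γ_j(u)`: the limit superior of `s([uw]_k)/[uw]_k` over words `w`
over `Σ_k` with `|w| ≡ j (mod a)`, as `|w| → ∞`. -/
noncomputable def gammaJ (k a j : ℕ) (s : ℕ → ℚ) (u : List ℕ) : ℝ :=
  Filter.limsup
    (fun w : List ℕ => (s (wordVal k (u ++ w)) : ℝ) / (wordVal k (u ++ w)))
    (wordFilter k a j)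

/-!
For a state `i` and words `u`, `w` with `n = |w|`, splitting off the prefix gives
`s_i(uw) = s_i(u0ⁿ) + s_{δ(i,u)}(w)`. Since `A` and `AB` lead to the same state, the excess
`E(w) = s(w) - γ[w]` satisfies `E(AB·X) - E(A·X) = D(|X|)` with `D` depending on `|X|` only, and
`D(n + |B|) = k^|B| D(n) + o(kⁿ)`. Telescoping, `E(ABᵐCw) - E(ABCw)` is, up to `o(k^|w|)`, a
nonnegative multiple of `E(ABCw) - E(ACw)`. Always `E(ACw) ≤ o(k^|w|)`, and
`γ_j(ABC) = γ` says that `E(ABCw) ≥ -o(k^|w|)` for infinitely many `w`, so the same holds for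
`E(ABᵐCw)`.

The growth hypothesis only controls the states `δ(i, 0)`. It spreads to all states because the
error at `i` is the average of the errors at `δ(i, 0), …, δ(i, k-1)`, one of which vanishes in the
limit, so that passing from length `n` to `n + 1` contracts the supremum by `(k-1)/k`.
-/

open Asymptotics Topology

/-! ### Real sequences -/

lemma bddAbove_range_of_le_mul_add {u b : ℕ → ℝ} {θ : ℝ} (hθ₀ : 0 ≤ θ) (hθ₁ : θ < 1)
    (hb : BddAbove (Set.range b)) (hu : ∀ n, u (n + 1) ≤ θ * u n + b n) :
    BddAbove (Set.range u) := by
  obtain ⟨M, hM⟩ := hb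
  have hθ : 0 < 1 - θ := sub_pos.2 hθ₁
  refine ⟨max (u 0) (M / (1 - θ)), Set.forall_mem_range.2 fun n => ?_⟩
  induction n with
  | zero => exact le_max_left _ _
  | succ n ih =>
    have hbn : b n ≤ M := hM (Set.mem_range_self n)
    have hfix : M ≤ (1 - θ) * max (u 0) (M / (1 - θ)) :=
      (div_le_iff₀' hθ).1 (le_max_right _ _)
    linarith [hu n, mul_le_mul_of_nonneg_left ih hθ₀]

lemma tendsto_zero_of_le_mul_add {u b : ℕ → ℝ} {θ : ℝ} (hθ₀ : 0 ≤ θ) (hθ₁ : θ < 1)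
    (hu₀ : ∀ n, 0 ≤ u n) (hb : Tendsto b atTop (𝓝 0)) (hu : ∀ n, u (n + 1) ≤ θ * u n + b n) :
    Tendsto u atTop (𝓝 0) := by
  have hbdd : IsBoundedUnder (· ≤ ·) atTop u :=
    (bddAbove_range_of_le_mul_add hθ₀ hθ₁ hb.bddAbove_range hu).isBoundedUnder_of_range
  have hbdd' : IsBoundedUnder (· ≥ ·) atTop u := isBoundedUnder_of ⟨0, hu₀⟩
  set L := limsup u atTop
  have hstep : ∀ ε > 0, L ≤ θ * (L + ε) + ε := fun ε hε => by
    refine (limsup_nat_add u 1).symm.trans_le <|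
      limsup_le_of_le (isBoundedUnder_of ⟨0, fun n => hu₀ _⟩).isCoboundedUnder_le ?_
    filter_upwards [eventually_lt_of_limsup_lt (lt_add_of_pos_right L hε) hbdd,
      hb.eventually_lt_const hε] with n hun hbn
    linarith [hu n, mul_le_mul_of_nonneg_left hun.le hθ₀]
  have hL : L ≤ 0 := by
    by_contra! hL
    have hε : 0 < L * (1 - θ) / 4 := by have := sub_pos.2 hθ₁; positivity
    nlinarith [hstep _ hε]
  exact tendsto_of_le_liminf_of_limsup_le
    (le_liminf_of_le hbdd.isCoboundedUnder_ge (.of_forall hu₀)) hL hbdd hbdd'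

lemma tendsto_zero_of_average {σ : Type*} [Finite σ] {k : ℕ} (hk : 0 < k) (δ : σ → ℕ → σ)
    (e : ℕ → σ → ℝ) (havg : ∀ n i, k * e (n + 1) i = ∑ y ∈ Finset.range k, e n (δ i y))
    (hzero : ∀ i, Tendsto (fun n => e n (δ i 0)) atTop (𝓝 0)) :
    Tendsto e atTop (𝓝 0) := by
  have := Fintype.ofFinite σ
  obtain ⟨l, rfl⟩ : ∃ l, k = l + 1 := ⟨k - 1, by omega⟩
  have hl : (0 : ℝ) < l + 1 := by positivity
  have hb : Tendsto (fun n => ‖fun i => e n (δ i 0)‖ / (l + 1)) atTop (𝓝 0) := by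
    simpa using
      (tendsto_zero_iff_norm_tendsto_zero.1 (tendsto_pi_nhds.2 hzero)).div_const (l + 1 : ℝ)
  refine tendsto_zero_iff_norm_tendsto_zero.2 <| tendsto_zero_of_le_mul_add
    (θ := l / (l + 1)) (by positivity) ((div_lt_one hl).2 (lt_add_one _))
    (fun n => norm_nonneg _) hb fun n => (pi_norm_le_iff_of_nonneg (by positivity)).2 fun i => ?_
  have hrest : |∑ y ∈ Finset.range l, e n (δ i (y + 1))| ≤ l * ‖e n‖ := by
    refine (Finset.abs_sum_le_sum_abs _ _).trans ?_
    simpa using Finset.sum_le_card_nsmul (Finset.range l) _ _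
      fun y _ => norm_le_pi_norm (e n) (δ i (y + 1))
  have hfirst : |e n (δ i 0)| ≤ ‖fun i => e n (δ i 0)‖ :=
    norm_le_pi_norm (fun i => e n (δ i 0)) i
  have hsplit := havg n i
  rw [Finset.sum_range_succ', Nat.cast_add_one] at hsplit
  rw [div_mul_eq_mul_div, ← add_div, le_div_iff₀' hl, Real.norm_eq_abs, ← abs_of_pos hl, ← abs_mul,
    hsplit]
  exact (abs_add_le _ _).trans (add_le_add hrest hfirst)

/-- The sequence `g` is, up to an error `o(κⁿ)`, multiplied by `κᵇ` when its argument grows by `b`;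
equivalently `g n / κⁿ` is asymptotically `b`-periodic when `κ > 0`. -/
def IsQuasiGeometric (κ : ℝ) (b : ℕ) (g : ℕ → ℝ) : Prop :=
  (fun n => g (n + b) - κ ^ b * g n) =o[atTop] fun n => κ ^ n

lemma isBigO_pow_add (κ : ℝ) (m : ℕ) (l : Filter ℕ) :
    (fun n => κ ^ (n + m)) =O[l] fun n => κ ^ n := by
  simpa only [pow_add, mul_comm] using (isBigO_refl (fun n => κ ^ n) l).const_mul_left (κ ^ m)

namespace IsQuasiGeometric

variable {κ : ℝ} {b : ℕ} {g h : ℕ → ℝ}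

lemma add (hg : IsQuasiGeometric κ b g) (hh : IsQuasiGeometric κ b h) :
    IsQuasiGeometric κ b fun n => g n + h n :=
  (IsLittleO.add hg hh).congr_left fun n => by ring

lemma sub (hg : IsQuasiGeometric κ b g) (hh : IsQuasiGeometric κ b h) :
    IsQuasiGeometric κ b fun n => g n - h n :=
  (IsLittleO.sub hg hh).congr_left fun n => by ring

lemma const_mul_pow (κ : ℝ) (b : ℕ) (c : ℝ) : IsQuasiGeometric κ b fun n => c * κ ^ n :=
  (isLittleO_zero _ _).congr_left fun n => by ring

lemma sum {ι : Type*} {t : Finset ι} {G : ι → ℕ → ℝ} (hG : ∀ i ∈ t, IsQuasiGeometric κ b (G i)) :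
    IsQuasiGeometric κ b fun n => ∑ i ∈ t, G i n :=
  (IsLittleO.fun_sum hG).congr_left fun n => by
    rw [Finset.sum_sub_distrib, Finset.mul_sum]

lemma comp_add_right (hg : IsQuasiGeometric κ b g) (m : ℕ) :
    IsQuasiGeometric κ b fun n => g (n + m) :=
  ((hg.comp_tendsto (tendsto_add_atTop_nat m)).trans_isBigO (isBigO_pow_add κ m _)).congr_left
    fun n => by simp only [Function.comp, add_right_comm]

lemma of_dvd (hg : IsQuasiGeometric κ b g) {b' : ℕ} (hb : b ∣ b') : IsQuasiGeometric κ b' g := by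
  obtain ⟨m, rfl⟩ := hb
  induction m with
  | zero => exact (isLittleO_zero _ _).congr_left fun n => by simp
  | succ m ih =>
    have hlast := hg.comp_add_right (b * m)
    refine (IsLittleO.add hlast (ih.const_mul_left (κ ^ b))).congr_left fun n => ?_
    have hn : n + b + b * m = n + b * (m + 1) := by ring
    simp only [hn]
    ring

end IsQuasiGeometric

lemma isQuasiGeometric_of_abs_sub_le {κ β K : ℝ} {a : ℕ} {g c : ℕ → ℝ} (ha : 0 < a) (hκ : 1 < κ)
    (hβ : 0 ≤ β) (hβκ : β < κ)
    (hg : ∀ j < a, ∀ n, |g (a * n + j) - c j * κ ^ (a * n + j)| ≤ K * β ^ (a * n)) :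
    IsQuasiGeometric κ a g := by
  set h : ℕ → ℝ := fun n => g n - c (n % a) * κ ^ n
  have hK : 0 ≤ K := by simpa using (abs_nonneg _).trans (hg 0 ha 0)
  have hbound : ∀ n, ‖h n‖ ≤ K * ‖max β 1 ^ n‖ := fun n => by
    have hn := hg (n % a) (Nat.mod_lt n ha) (n / a)
    rw [Nat.div_add_mod] at hn
    have hpow : β ^ (a * (n / a)) ≤ max β 1 ^ n :=
      (pow_le_pow_left₀ hβ (le_max_left _ _) _).trans
        (pow_le_pow_right₀ (le_max_right _ _) (Nat.mul_div_le n a))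
    exact (hn.trans (mul_le_mul_of_nonneg_left hpow hK)).trans
      (mul_le_mul_of_nonneg_left (le_abs_self _) hK)
  have hlittle : h =o[atTop] fun n => κ ^ n :=
    (IsBigO.of_bound K (.of_forall hbound)).trans_isLittleO
      (isLittleO_pow_pow_of_lt_left (by positivity) (max_lt hβκ hκ))
  have hshift : (fun n => h (n + a)) =o[atTop] fun n => κ ^ n :=
    (hlittle.comp_tendsto (tendsto_add_atTop_nat a)).trans_isBigO (isBigO_pow_add κ a _)
  refine (hshift.sub (hlittle.const_mul_left (κ ^ a))).congr_left fun n => ?_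
  simp only [h, Nat.add_mod_right, pow_add]
  ring

/-! ### Limits superior of quotients -/

section Limsup

variable {α : Type*} {l : Filter α} {S V ρ : α → ℝ} {γ K : ℝ}

lemma eventually_sub_mul_le_of_limsup_div_le (hbdd : l.IsBoundedUnder (· ≤ ·) fun w => S w / V w)
    (hV : ∀ᶠ w in l, 0 < V w) (hVρ : ∀ᶠ w in l, V w ≤ K * ρ w) (hK : 0 < K)
    (hγ : limsup (fun w => S w / V w) l ≤ γ) {ε : ℝ} (hε : 0 < ε) :
    ∀ᶠ w in l, S w - γ * V w ≤ ε * ρ w := by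
  have hlt : limsup (fun w => S w / V w) l < γ + ε / K := hγ.trans_lt (by simpa using div_pos hε hK)
  filter_upwards [eventually_lt_of_limsup_lt hlt hbdd, hV, hVρ] with w hw hVw hVρw
  rw [div_lt_iff₀ hVw] at hw
  have : ε / K * V w ≤ ε * ρ w :=
    (mul_le_mul_of_nonneg_left hVρw (by positivity)).trans_eq (by field_simp)
  linarith

lemma le_limsup_div_iff (hbdd : l.IsBoundedUnder (· ≤ ·) fun w => S w / V w)
    (hcobdd : l.IsCoboundedUnder (· ≤ ·) fun w => S w / V w)
    (hρ : ∀ᶠ w in l, 0 < ρ w) (hρV : ∀ᶠ w in l, ρ w ≤ V w) (hVρ : ∀ᶠ w in l, V w ≤ K * ρ w)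
    (hK : 0 < K) :
    γ ≤ limsup (fun w => S w / V w) l ↔ ∀ ε > 0, ∃ᶠ w in l, -ε * ρ w ≤ S w - γ * V w := by
  rw [le_limsup_iff hcobdd hbdd]
  constructor
  · intro h ε hε
    refine ((h (γ - ε / K) (by simpa using div_pos hε hK)).and_eventually
      (hρ.and (hρV.and hVρ))).mono fun w ⟨hw, hρw, hρVw, hVρw⟩ => ?_
    rw [lt_div_iff₀ (hρw.trans_le hρVw)] at hw
    have : ε / K * V w ≤ ε * ρ w :=
      (mul_le_mul_of_nonneg_left hVρw (by positivity)).trans_eq (by field_simp)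
    linarith
  · intro h y hy
    have hε : 0 < (γ - y) / 2 := half_pos (sub_pos.2 hy)
    refine ((h _ hε).and_eventually (hρ.and hρV)).mono fun w ⟨hw, hρw, hρVw⟩ => ?_
    rw [lt_div_iff₀ (hρw.trans_le hρVw)]
    nlinarith [hw]

lemma frequently_neg_mul_le_of_isLittleO {y₀ y₁ y : α → ℝ} (hK : 0 ≤ K) (hρ : ∀ᶠ w in l, 0 ≤ ρ w)
    (hy₀ : ∀ ε > 0, ∀ᶠ w in l, y₀ w ≤ ε * ρ w)
    (hy₁ : ∀ ε > 0, ∃ᶠ w in l, -ε * ρ w ≤ y₁ w)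
    (hy : (fun w => y w - y₁ w - K * (y₁ w - y₀ w)) =o[l] ρ) {ε : ℝ} (hε : 0 < ε) :
    ∃ᶠ w in l, -ε * ρ w ≤ y w := by
  set η := ε / (2 + 2 * K) with hη
  have hη₀ : 0 < η := by positivity
  refine ((hy₁ η hη₀).and_eventually ((hy₀ η hη₀).and ((hy.bound hη₀).and hρ))).mono
    fun w ⟨h₁, h₀, hw, hρw⟩ => ?_
  rw [Real.norm_eq_abs, Real.norm_of_nonneg hρw] at hw
  have hdiff : K * (-η * ρ w - η * ρ w) ≤ K * (y₁ w - y₀ w) :=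
    mul_le_mul_of_nonneg_left (by linarith [h₀, h₁]) hK
  have hsum : ε * ρ w = η * ρ w + (η * ρ w + K * (η * ρ w + η * ρ w)) := by
    rw [hη]; field_simp; ring
  linarith [neg_le_of_abs_le hw]

end Limsup

/-! ### Words and their values -/

section Words

variable {k : ℕ}

lemma forall_mem_replicate_zero_lt (hk : 0 < k) (n : ℕ) : ∀ x ∈ List.replicate n 0, x < k :=
  fun _ hx => List.eq_of_mem_replicate hx ▸ hk

lemma wordVal_eq_ofDigits (k : ℕ) (w : List ℕ) : wordVal k w = Nat.ofDigits k w.reverse := by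
  simp only [wordVal, Nat.ofDigits_eq_foldr, List.foldr_reverse, Nat.cast_id, add_comm]

lemma wordVal_append (k : ℕ) (u w : List ℕ) :
    wordVal k (u ++ w) = wordVal k u * k ^ w.length + wordVal k w := by
  simp only [wordVal_eq_ofDigits, List.reverse_append, Nat.ofDigits_append, List.length_reverse]
  ring

lemma wordVal_cons (k x : ℕ) (w : List ℕ) :
    wordVal k (x :: w) = x * k ^ w.length + wordVal k w := by
  simpa [wordVal] using wordVal_append k [x] w

@[simp]
lemma wordVal_replicate_zero (k n : ℕ) : wordVal k (List.replicate n 0) = 0 := by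
  induction n with
  | zero => rfl
  | succ n ih => rw [List.replicate_succ, wordVal_cons, ih, zero_mul]

lemma wordVal_lt_pow_length (hk : 1 < k) {w : List ℕ} (hw : ∀ x ∈ w, x < k) :
    wordVal k w < k ^ w.length := by
  rw [wordVal_eq_ofDigits, ← List.length_reverse]
  exact Nat.ofDigits_lt_base_pow_length hk (by simpa using hw)

lemma wordVal_cons_lt_cons_iff (hk : 1 < k) {x y : ℕ} {v w : List ℕ} (hv : ∀ x ∈ v, x < k)
    (hw : ∀ x ∈ w, x < k) (hlen : v.length = w.length) :
    wordVal k (y :: v) < wordVal k (x :: w) ↔ y < x ∨ y = x ∧ wordVal k v < wordVal k w := by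
  have hvlt := hlen ▸ wordVal_lt_pow_length hk hv
  have hwlt := wordVal_lt_pow_length hk hw
  rw [wordVal_cons, wordVal_cons, hlen]
  rcases lt_trichotomy y x with hyx | rfl | hxy
  · have := Nat.mul_le_mul_right (k ^ w.length) (Nat.succ_le_of_lt hyx)
    rw [Nat.succ_mul] at this
    simp only [hyx, true_or, iff_true]
    omega
  · simp
  · have := Nat.mul_le_mul_right (k ^ w.length) (Nat.succ_le_of_lt hxy)
    rw [Nat.succ_mul] at this
    simp only [hxy.not_gt, hxy.ne', false_and, or_self, iff_false]
    omega

lemma reverse_digits_wordVal (hk : 1 < k) {w : List ℕ} (hw : ∀ x ∈ w, x < k)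
    (hlead : w.head? ≠ some 0) : (Nat.digits k (wordVal k w)).reverse = w := by
  rw [wordVal_eq_ofDigits, Nat.digits_ofDigits k hk _ (by simpa using hw), List.reverse_reverse]
  intro hne hlast
  rw [List.getLast_reverse] at hlast
  exact hlead (hlast ▸ List.head?_eq_some_head _)

lemma reverse_digits_pow (hk : 1 < k) (n : ℕ) :
    (Nat.digits k (k ^ n)).reverse = 1 :: List.replicate n 0 := by
  rw [← mul_one (k ^ n), Nat.digits_base_pow_mul hk one_pos, Nat.digits_of_lt k 1 one_ne_zero hk]
  simp

lemma wordVal_pos {w : List ℕ} (hk : 0 < k) (hne : w ≠ []) (hlead : w.head? ≠ some 0) :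
    0 < wordVal k w := by
  cases w with
  | nil => exact absurd rfl hne
  | cons x w =>
    rw [wordVal_cons]
    have hx : 0 < x := Nat.pos_of_ne_zero (by simpa using hlead)
    positivity

lemma pow_length_le_wordVal_append {u : List ℕ} (hu : 0 < wordVal k u) (w : List ℕ) :
    k ^ w.length ≤ wordVal k (u ++ w) := by
  rw [wordVal_append]
  exact (Nat.le_mul_of_pos_left _ hu).trans (Nat.le_add_right _ _)

lemma wordVal_append_le (hk : 1 < k) (u : List ℕ) {w : List ℕ} (hw : ∀ x ∈ w, x < k) :
    wordVal k (u ++ w) ≤ (wordVal k u + 1) * k ^ w.length := by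
  rw [wordVal_append, Nat.succ_mul]
  exact Nat.add_le_add_left (wordVal_lt_pow_length hk hw).le _

lemma mem_kwords {n : ℕ} {v : List ℕ} : v ∈ kwords k n ↔ v.length = n ∧ ∀ x ∈ v, x < k := by
  simp only [kwords, Finset.mem_image, Finset.mem_univ, true_and]
  constructor
  · rintro ⟨g, rfl⟩
    simp [List.mem_ofFn]
  · rintro ⟨rfl, h⟩
    exact ⟨fun i => ⟨v[i], h _ (by simp)⟩, by simp⟩

lemma injOn_wordVal_kwords (hk : 1 < k) (n : ℕ) :
    Set.InjOn (wordVal k) (kwords k n : Set (List ℕ)) := fun v hv w hw hvw => by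
  obtain ⟨hvlen, hv⟩ := mem_kwords.1 hv
  obtain ⟨hwlen, hw⟩ := mem_kwords.1 hw
  rw [wordVal_eq_ofDigits, wordVal_eq_ofDigits] at hvw
  exact List.reverse_injective <| Nat.ofDigits_inj_of_len_eq hk (by simp [hvlen, hwlen])
    (by simpa using hv) (by simpa using hw) hvw

lemma sum_kwords_succ {M : Type*} [AddCommMonoid M] (k n : ℕ) (F : List ℕ → M) :
    ∑ v ∈ kwords k (n + 1), F v = ∑ y ∈ Finset.range k, ∑ v ∈ kwords k n, F (y :: v) := by
  rw [← Finset.sum_product']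
  refine (Finset.sum_bij (fun p _ => p.1 :: p.2) ?_ ?_ ?_ fun _ _ => rfl).symm
  · simp +contextual [mem_kwords]
  · rintro ⟨y, v⟩ _ ⟨y', v'⟩ _ h
    simpa using h
  · rintro (_ | ⟨y, v⟩) hv
    · simp [mem_kwords] at hv
    · exact ⟨(y, v), by simpa [mem_kwords, and_left_comm] using hv, rfl⟩

end Words

/-! ### Sums over words -/

section Sums

variable {k : ℕ}

/-- The sum of `g` over all words of length `n` over `Σ_k`. -/
def wordSum (k : ℕ) (g : List ℕ → ℚ) (n : ℕ) : ℚ := ∑ v ∈ kwords k n, g v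

@[simp]
lemma sWord_replicate_zero (k n : ℕ) (g : List ℕ → ℚ) : sWord k g (List.replicate n 0) = 0 := by
  simp [sWord]

lemma sWord_cons (hk : 1 < k) (g : List ℕ → ℚ) {x : ℕ} (hx : x < k) {w : List ℕ}
    (hw : ∀ x ∈ w, x < k) :
    sWord k g (x :: w) = ∑ y ∈ Finset.range x, wordSum k (fun v => g (y :: v)) w.length
      + sWord k (fun v => g (x :: v)) w := by
  have hiff : ∀ y, ∀ v ∈ kwords k w.length, wordVal k (y :: v) < wordVal k (x :: w) ↔
      y < x ∨ y = x ∧ wordVal k v < wordVal k w := fun y v hv =>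
    wordVal_cons_lt_cons_iff hk (mem_kwords.1 hv).2 hw (mem_kwords.1 hv).1
  have hsub : Finset.range (x + 1) ⊆ Finset.range k := Finset.range_subset_range.2 hx
  rw [sWord, Finset.sum_filter, List.length_cons, sum_kwords_succ, ← Finset.sum_subset hsub,
    Finset.sum_range_succ]
  · congr 1
    · refine Finset.sum_congr rfl fun y hy => Finset.sum_congr rfl fun v hv => if_pos ?_
      exact (hiff y v hv).2 (.inl (Finset.mem_range.1 hy))
    · rw [sWord, Finset.sum_filter]
      exact Finset.sum_congr rfl fun v hv => if_congr (by simpa using hiff x v hv) rfl rfl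
  · intro y _ hy
    rw [Finset.mem_range] at hy
    refine Finset.sum_eq_zero fun v hv => if_neg ?_
    rw [hiff y v hv]
    omega

lemma abs_sWord_le (hk : 1 < k) {g : List ℕ → ℚ} {M : ℚ}
    (hg : ∀ v : List ℕ, (∀ x ∈ v, x < k) → |g v| ≤ M) (w : List ℕ) :
    |sWord k g w| ≤ M * wordVal k w := by
  set t := (kwords k w.length).filter fun v => wordVal k v < wordVal k w
  have hM : 0 ≤ M := (abs_nonneg _).trans (hg [] (by simp))
  have hcard : t.card ≤ wordVal k w := by
    rw [← Finset.card_range (wordVal k w)]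
    refine Finset.card_le_card_of_injOn (wordVal k) (fun v hv => ?_)
      ((injOn_wordVal_kwords hk _).mono (Finset.filter_subset _ _))
    simpa using (Finset.mem_filter.1 hv).2
  calc |sWord k g w| ≤ ∑ v ∈ t, |g v| := Finset.abs_sum_le_sum_abs _ _
    _ ≤ t.card • M := Finset.sum_le_card_nsmul _ _ _ fun v hv =>
        hg v (mem_kwords.1 (Finset.mem_filter.1 hv).1).2
    _ ≤ M * wordVal k w := by
        rw [nsmul_eq_mul, mul_comm]
        gcongr

end Sums

/-! ### Functions computed by an automaton -/

/-- Reading the letter `x < k` in front of a word moves the state `i` to `δ i x`: the family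
`f` of functions on words over `Σ_k` is closed under `w ↦ xw`, as recorded by `δ`. The extension
of `δ` to words is `List.foldl δ`. -/
def IsTransition {σ : Type*} (k : ℕ) (f : σ → List ℕ → ℚ) (δ : σ → ℕ → σ) : Prop :=
  ∀ i, ∀ x < k, ∀ w, f i (x :: w) = f (δ i x) w

namespace IsTransition

variable {σ : Type*} {k : ℕ} {f : σ → List ℕ → ℚ} {δ : σ → ℕ → σ}

lemma apply_eq_foldl_nil (hδ : IsTransition k f δ) (i : σ) {w : List ℕ} (hw : ∀ x ∈ w, x < k) :
    f i w = f (w.foldl δ i) [] := by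
  induction w generalizing i with
  | nil => rfl
  | cons x w ih =>
    obtain ⟨hx, hw⟩ := List.forall_mem_cons.1 hw
    rw [hδ i x hx, ih _ hw, List.foldl_cons]

lemma wordSum_succ (hδ : IsTransition k f δ) (i : σ) (n : ℕ) :
    wordSum k (f i) (n + 1) = ∑ y ∈ Finset.range k, wordSum k (f (δ i y)) n := by
  rw [wordSum, sum_kwords_succ]
  exact Finset.sum_congr rfl fun y hy =>
    Finset.sum_congr rfl fun v _ => hδ i y (Finset.mem_range.1 hy) v

lemma sWord_cons (hδ : IsTransition k f δ) (hk : 1 < k) (i : σ) {x : ℕ} (hx : x < k) {w : List ℕ}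
    (hw : ∀ x ∈ w, x < k) :
    sWord k (f i) (x :: w) = ∑ y ∈ Finset.range x, wordSum k (f (δ i y)) w.length
      + sWord k (f (δ i x)) w := by
  have hf : ∀ y ≤ x, (fun v => f i (y :: v)) = f (δ i y) := fun y hy =>
    funext fun v => hδ i y (hy.trans_lt hx) v
  rw [_root_.sWord_cons hk (f i) hx hw, hf x le_rfl]
  congr 1
  exact Finset.sum_congr rfl fun y hy => by rw [hf y (Finset.mem_range.1 hy).le]

lemma sWord_append (hδ : IsTransition k f δ) (hk : 1 < k) (i : σ) {u w : List ℕ}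
    (hu : ∀ x ∈ u, x < k) (hw : ∀ x ∈ w, x < k) :
    sWord k (f i) (u ++ w) =
      sWord k (f i) (u ++ List.replicate w.length 0) + sWord k (f (u.foldl δ i)) w := by
  induction u generalizing i with
  | nil => simp
  | cons x u ih =>
    obtain ⟨hx, hu⟩ := List.forall_mem_cons.1 hu
    rw [List.cons_append, List.cons_append,
      hδ.sWord_cons hk i hx (List.forall_mem_append.2 ⟨hu, hw⟩),
      hδ.sWord_cons hk i hx
        (List.forall_mem_append.2 ⟨hu, forall_mem_replicate_zero_lt (by omega) _⟩),
      ih _ hu, List.foldl_cons]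
    simp only [List.length_append, List.length_replicate, add_assoc]

lemma sWord_reverse_digits_pow (hδ : IsTransition k f δ) (hk : 1 < k) (i : σ) (n : ℕ) :
    sWord k (f i) (Nat.digits k (k ^ n)).reverse = wordSum k (f (δ i 0)) n := by
  rw [reverse_digits_pow hk, hδ.sWord_cons hk i hk (forall_mem_replicate_zero_lt (by omega) n)]
  simp

lemma exists_abs_sWord_le [Finite σ] (hδ : IsTransition k f δ) (hk : 1 < k) :
    ∃ M : ℚ, ∀ i w, |sWord k (f i) w| ≤ M * wordVal k w := by
  obtain ⟨M, hM⟩ := Finite.exists_le fun i => |f i []|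
  exact ⟨M, fun i w => abs_sWord_le hk
    (fun v hv => (hδ.apply_eq_foldl_nil i hv).symm ▸ hM _) w⟩

lemma isQuasiGeometric_wordSum [Finite σ] (hδ : IsTransition k f δ) (hk : 1 < k) {a : ℕ}
    (hpow : ∀ i, IsQuasiGeometric k a fun n => (sWord k (f i) (Nat.digits k (k ^ n)).reverse : ℝ))
    (i : σ) : IsQuasiGeometric k a fun n => (wordSum k (f i) n : ℝ) := by
  have hk₀ : (k : ℝ) ≠ 0 := by positivity
  have htendsto : ∀ g : ℕ → ℝ, IsQuasiGeometric k a g ↔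
      Tendsto (fun n => (g (n + a) - (k : ℝ) ^ a * g n) / (k : ℝ) ^ n) atTop (𝓝 0) := fun g =>
    isLittleO_iff_tendsto fun n hn => absurd hn (pow_ne_zero n hk₀)
  set e : ℕ → σ → ℝ := fun n i =>
    (wordSum k (f i) (n + a) - (k : ℝ) ^ a * wordSum k (f i) n) / (k : ℝ) ^ n with he
  have havg : ∀ n i, k * e (n + 1) i = ∑ y ∈ Finset.range k, e n (δ i y) := fun n i => by
    simp only [he, add_right_comm n 1 a, hδ.wordSum_succ, Rat.cast_sum]
    rw [← Finset.sum_div, Finset.sum_sub_distrib, Finset.mul_sum, pow_succ]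
    field_simp
  simp only [hδ.sWord_reverse_digits_pow hk, htendsto] at hpow
  exact (htendsto _).2
    (tendsto_pi_nhds.1 (tendsto_zero_of_average (by omega) δ e havg hpow) i)

lemma isQuasiGeometric_sWord_append_replicate [Finite σ] (hδ : IsTransition k f δ) (hk : 1 < k)
    {a : ℕ}
    (hpow : ∀ i, IsQuasiGeometric k a fun n => (sWord k (f i) (Nat.digits k (k ^ n)).reverse : ℝ))
    (i : σ) {u : List ℕ} (hu : ∀ x ∈ u, x < k) :
    IsQuasiGeometric k a fun n => (sWord k (f i) (u ++ List.replicate n 0) : ℝ) := by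
  induction u generalizing i with
  | nil => simpa using IsQuasiGeometric.const_mul_pow k a 0
  | cons x u ih =>
    obtain ⟨hx, hu⟩ := List.forall_mem_cons.1 hu
    have hcons : ∀ n, (sWord k (f i) (x :: u ++ List.replicate n 0) : ℝ) =
        ∑ y ∈ Finset.range x, (wordSum k (f (δ i y)) (n + u.length) : ℝ) +
          sWord k (f (δ i x)) (u ++ List.replicate n 0) := fun n => by
      rw [List.cons_append, hδ.sWord_cons hk i hx
        (List.forall_mem_append.2 ⟨hu, forall_mem_replicate_zero_lt (by omega) n⟩)]
      simp [add_comm n]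
    simp only [hcons]
    exact (IsQuasiGeometric.sum fun y _ =>
      (hδ.isQuasiGeometric_wordSum hk hpow (δ i y)).comp_add_right u.length).add (ih _ hu)

end IsTransition

/-! ### The limit superior along extensions of a word -/

section GammaJ

variable {k a j : ℕ}

lemma tendsto_length_wordFilter (k a j : ℕ) : Tendsto List.length (wordFilter k a j) atTop :=
  tendsto_comap.mono_left inf_le_left

lemma eventually_forall_mem_lt_wordFilter (k a j : ℕ) :
    ∀ᶠ w in wordFilter k a j, ∀ x ∈ w, x < k :=
  mem_inf_of_right fun _ hw => hw.1

lemma wordFilter_neBot (hk : 0 < k) (hj : j < a) : (wordFilter k a j).NeBot := by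
  rw [wordFilter, inf_principal_neBot_iff]
  intro U hU
  obtain ⟨t, ht, htU⟩ := mem_comap.1 hU
  obtain ⟨N, hN⟩ := mem_atTop_sets.1 ht
  refine ⟨List.replicate (a * N + j) 0, htU (hN _ ?_), forall_mem_replicate_zero_lt hk _, ?_⟩
  · rw [List.length_replicate]
    exact (Nat.le_mul_of_pos_left N (by omega)).trans (Nat.le_add_right _ _)
  · simp [Nat.mod_eq_of_lt hj]

lemma tendsto_wordVal_append (hk : 1 < k) (a j : ℕ) {u : List ℕ} (hu : 0 < wordVal k u) :
    Tendsto (fun w => wordVal k (u ++ w)) (wordFilter k a j) atTop :=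
  tendsto_atTop_mono
    (fun w => (Nat.lt_pow_self hk).le.trans (pow_length_le_wordVal_append hu w))
    (tendsto_length_wordFilter k a j)

variable {s : ℕ → ℚ} {M : ℝ} {u : List ℕ} {γ : ℝ}

lemma isBoundedUnder_le_div (hs : ∀ n, |(s n : ℝ) / n| ≤ M) {α : Type*} (l : Filter α)
    (v : α → ℕ) : l.IsBoundedUnder (· ≤ ·) fun w => (s (v w) : ℝ) / v w :=
  isBoundedUnder_of ⟨M, fun w => (abs_le.1 (hs (v w))).2⟩

lemma isCoboundedUnder_le_div (hs : ∀ n, |(s n : ℝ) / n| ≤ M) {α : Type*} (l : Filter α) [l.NeBot]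
    (v : α → ℕ) : l.IsCoboundedUnder (· ≤ ·) fun w => (s (v w) : ℝ) / v w :=
  IsBoundedUnder.isCoboundedUnder_le
    (isBoundedUnder_of ⟨-M, fun w => (abs_le.1 (hs (v w))).1⟩)

lemma gammaJ_le_limsup (hk : 1 < k) (hj : j < a) (hs : ∀ n, |(s n : ℝ) / n| ≤ M)
    (hu : 0 < wordVal k u) : gammaJ k a j s u ≤ limsup (fun n : ℕ => (s n : ℝ) / n) atTop := by
  have := wordFilter_neBot (k := k) (by omega) hj
  have htendsto := tendsto_wordVal_append hk a j hu
  exact (limsup_comp (fun n : ℕ => (s n : ℝ) / n) _ _).trans_le <|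
    limsup_le_limsup_of_le htendsto (isCoboundedUnder_le_div hs _ id)
      (isBoundedUnder_le_div hs _ id)

lemma eventually_pow_length_le_wordVal_append (hu : 0 < wordVal k u) :
    ∀ᶠ w in wordFilter k a j, (k : ℝ) ^ w.length ≤ wordVal k (u ++ w) :=
  .of_forall fun w => by exact_mod_cast pow_length_le_wordVal_append hu w

lemma eventually_wordVal_append_le (hk : 1 < k) (u : List ℕ) :
    ∀ᶠ w in wordFilter k a j,
      (wordVal k (u ++ w) : ℝ) ≤ (wordVal k u + 1) * (k : ℝ) ^ w.length := by
  filter_upwards [eventually_forall_mem_lt_wordFilter k a j] with w hw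
  exact_mod_cast wordVal_append_le hk u hw

lemma eventually_sub_mul_wordVal_le (hk : 1 < k) (hs : ∀ n, |(s n : ℝ) / n| ≤ M)
    (hu : 0 < wordVal k u) (hγ : gammaJ k a j s u ≤ γ) {ε : ℝ} (hε : 0 < ε) :
    ∀ᶠ w in wordFilter k a j,
      s (wordVal k (u ++ w)) - γ * wordVal k (u ++ w) ≤ ε * (k : ℝ) ^ w.length := by
  have hpos : ∀ᶠ w in wordFilter k a j, (0 : ℝ) < wordVal k (u ++ w) :=
    (eventually_pow_length_le_wordVal_append hu).mono fun w hw => lt_of_lt_of_le (by positivity) hw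
  exact eventually_sub_mul_le_of_limsup_div_le (isBoundedUnder_le_div hs _ _) hpos
    (eventually_wordVal_append_le hk u) (by positivity) hγ hε

lemma le_gammaJ_iff (hk : 1 < k) (hj : j < a) (hs : ∀ n, |(s n : ℝ) / n| ≤ M)
    (hu : 0 < wordVal k u) :
    γ ≤ gammaJ k a j s u ↔ ∀ ε > 0, ∃ᶠ w in wordFilter k a j,
      -ε * (k : ℝ) ^ w.length ≤ s (wordVal k (u ++ w)) - γ * wordVal k (u ++ w) := by
  have := wordFilter_neBot (k := k) (by omega) hj
  exact le_limsup_div_iff (isBoundedUnder_le_div hs _ _) (isCoboundedUnder_le_div hs _ _)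
    (.of_forall fun w => by positivity) (eventually_pow_length_le_wordVal_append hu)
    (eventually_wordVal_append_le hk u) (by positivity)

end GammaJ

/-! ### Pumping -/

/-- The amount by which the sum of `g` over the words preceding `w` exceeds `γ [w]_k`. -/
noncomputable def excess (k : ℕ) (γ : ℝ) (g : List ℕ → ℚ) (w : List ℕ) : ℝ :=
  sWord k g w - γ * wordVal k w

/-- The difference of the excesses of `u` and `v` extended by `n` zeros. When `u` and `v` lead to
the same state, zeros may be replaced by any other word of length `n`. -/
noncomputable def excessGap (k : ℕ) (γ : ℝ) (g : List ℕ → ℚ) (u v : List ℕ) (n : ℕ) : ℝ :=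
  excess k γ g (u ++ List.replicate n 0) - excess k γ g (v ++ List.replicate n 0)

/-- The word `A Bᵐ C`. -/
def pump (A B C : List ℕ) (m : ℕ) : List ℕ := A ++ (List.replicate m B).flatten ++ C

section Pump

variable {k : ℕ} {A B C : List ℕ}

lemma pump_append (A B C w : List ℕ) (m : ℕ) : pump A B C m ++ w = A ++ (pump [] B C m ++ w) := by
  simp [pump]

lemma pump_succ_append (A B C w : List ℕ) (m : ℕ) :
    pump A B C (m + 1) ++ w = A ++ B ++ (pump [] B C m ++ w) := by
  simp [pump, List.replicate_succ]

lemma length_pump (A B C : List ℕ) (m : ℕ) :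
    (pump A B C m).length = A.length + m * B.length + C.length := by
  simp [pump, add_assoc]

lemma head?_pump_append (hA : A ≠ []) (B C w : List ℕ) (m : ℕ) :
    (pump A B C m ++ w).head? = A.head? := by
  rw [pump_append, List.head?_append_of_ne_nil _ hA]

lemma forall_mem_pump_lt (hA : ∀ x ∈ A, x < k) (hB : ∀ x ∈ B, x < k) (hC : ∀ x ∈ C, x < k)
    (m : ℕ) : ∀ x ∈ pump A B C m, x < k := by
  have hBm : ∀ x ∈ (List.replicate m B).flatten, x < k := by
    simp only [List.mem_flatten, List.mem_replicate]
    rintro x ⟨_, ⟨_, rfl⟩, hx⟩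
    exact hB x hx
  exact List.forall_mem_append.2 ⟨List.forall_mem_append.2 ⟨hA, hBm⟩, hC⟩

lemma wordVal_pump_pos (hk : 0 < k) (hA : 0 < wordVal k A) (B C : List ℕ) (m : ℕ) :
    0 < wordVal k (pump A B C m) := by
  rw [pump, List.append_assoc]
  exact (pow_pos hk _).trans_le (pow_length_le_wordVal_append hA _)

lemma excess_eq_sub_mul_wordVal (hk : 1 < k) {g : List ℕ → ℚ} {s : ℕ → ℚ}
    (hs : ∀ n, s n = sWord k g (Nat.digits k n).reverse) (γ : ℝ) {w : List ℕ}
    (hw : ∀ x ∈ w, x < k) (hlead : w.head? ≠ some 0) :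
    excess k γ g w = s (wordVal k w) - γ * wordVal k w := by
  rw [hs, reverse_digits_wordVal hk hw hlead, excess]

end Pump

namespace IsTransition

variable {σ : Type*} {k : ℕ} {f : σ → List ℕ → ℚ} {δ : σ → ℕ → σ} {i : σ} {A B C : List ℕ}

lemma exists_abs_div_le [Finite σ] (hδ : IsTransition k f δ) (hk : 1 < k) {s : ℕ → ℚ}
    (hs : ∀ n, s n = sWord k (f i) (Nat.digits k n).reverse) :
    ∃ M : ℝ, ∀ n, |(s n : ℝ) / n| ≤ M := by
  obtain ⟨M, hM⟩ := hδ.exists_abs_sWord_le hk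
  refine ⟨max M 0, fun n => ?_⟩
  have hn := hM i (Nat.digits k n).reverse
  rw [← hs, wordVal_eq_ofDigits, List.reverse_reverse, Nat.ofDigits_digits] at hn
  have hn' : |(s n : ℝ)| ≤ M * n := by exact_mod_cast hn
  rw [abs_div, Nat.abs_cast]
  exact div_le_of_le_mul₀ n.cast_nonneg (le_max_right _ _)
    (hn'.trans (mul_le_mul_of_nonneg_right (le_max_left _ _) n.cast_nonneg))

lemma excess_append_sub_excess_append (hδ : IsTransition k f δ) (hk : 1 < k) (γ : ℝ)
    {u v w : List ℕ} (hu : ∀ x ∈ u, x < k) (hv : ∀ x ∈ v, x < k) (hw : ∀ x ∈ w, x < k)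
    (huv : u.foldl δ i = v.foldl δ i) :
    excess k γ (f i) (u ++ w) - excess k γ (f i) (v ++ w) =
      excessGap k γ (f i) u v w.length := by
  simp only [excessGap, excess, hδ.sWord_append hk i hu hw, hδ.sWord_append hk i hv hw, huv,
    wordVal_append, wordVal_replicate_zero, List.length_replicate]
  push_cast
  ring

lemma excess_pump_succ_sub (hδ : IsTransition k f δ) (hk : 1 < k) (γ : ℝ)
    (hA : ∀ x ∈ A, x < k) (hB : ∀ x ∈ B, x < k) (hC : ∀ x ∈ C, x < k)
    (hAB : A.foldl δ i = (A ++ B).foldl δ i) (m : ℕ) {w : List ℕ} (hw : ∀ x ∈ w, x < k) :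
    excess k γ (f i) (pump A B C (m + 1) ++ w) - excess k γ (f i) (pump A B C m ++ w) =
      excessGap k γ (f i) (A ++ B) A (w.length + m * B.length + C.length) := by
  have htail := List.forall_mem_append.2 ⟨forall_mem_pump_lt (A := []) (by simp) hB hC m, hw⟩
  rw [pump_succ_append, pump_append A, hδ.excess_append_sub_excess_append hk γ
    (List.forall_mem_append.2 ⟨hA, hB⟩) hA htail hAB.symm, List.length_append, length_pump]
  congr 1
  simp only [List.length_nil]
  omega

lemma excess_pump_succ_sub_pump_one (hδ : IsTransition k f δ) (hk : 1 < k) (γ : ℝ)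
    (hA : ∀ x ∈ A, x < k) (hB : ∀ x ∈ B, x < k) (hC : ∀ x ∈ C, x < k)
    (hAB : A.foldl δ i = (A ++ B).foldl δ i) (m : ℕ) {w : List ℕ} (hw : ∀ x ∈ w, x < k) :
    excess k γ (f i) (pump A B C (m + 1) ++ w) - excess k γ (f i) (pump A B C 1 ++ w) =
      ∑ p ∈ Finset.range m,
        excessGap k γ (f i) (A ++ B) A (w.length + (p + 1) * B.length + C.length) := by
  rw [← Finset.sum_range_sub (fun p => excess k γ (f i) (pump A B C (p + 1) ++ w))]
  exact Finset.sum_congr rfl fun p _ => hδ.excess_pump_succ_sub hk γ hA hB hC hAB (p + 1) hw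

section Growth

variable [Finite σ] {a : ℕ}

lemma isQuasiGeometric_excess_append_replicate (hδ : IsTransition k f δ) (hk : 1 < k)
    (hpow : ∀ i, IsQuasiGeometric k a fun n => (sWord k (f i) (Nat.digits k (k ^ n)).reverse : ℝ))
    (γ : ℝ) {u : List ℕ} (hu : ∀ x ∈ u, x < k) :
    IsQuasiGeometric k a fun n => excess k γ (f i) (u ++ List.replicate n 0) := by
  have hval := IsQuasiGeometric.const_mul_pow k a (γ * wordVal k u)
  simpa [excess, wordVal_append, mul_assoc] using
    (hδ.isQuasiGeometric_sWord_append_replicate hk hpow i hu).sub hval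

lemma isQuasiGeometric_excessGap (hδ : IsTransition k f δ) (hk : 1 < k)
    (hpow : ∀ i, IsQuasiGeometric k a fun n => (sWord k (f i) (Nat.digits k (k ^ n)).reverse : ℝ))
    (γ : ℝ) {u v : List ℕ} (hu : ∀ x ∈ u, x < k) (hv : ∀ x ∈ v, x < k) :
    IsQuasiGeometric k a (excessGap k γ (f i) u v) :=
  (hδ.isQuasiGeometric_excess_append_replicate hk hpow γ hu).sub
    (hδ.isQuasiGeometric_excess_append_replicate hk hpow γ hv)

lemma isLittleO_excess_pump (hδ : IsTransition k f δ) (hk : 1 < k)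
    (hpow : ∀ i, IsQuasiGeometric k a fun n => (sWord k (f i) (Nat.digits k (k ^ n)).reverse : ℝ))
    (γ : ℝ) (hA : ∀ x ∈ A, x < k) (hB : ∀ x ∈ B, x < k) (hC : ∀ x ∈ C, x < k)
    (hlen : a ∣ B.length) (hAB : A.foldl δ i = (A ++ B).foldl δ i) (m j : ℕ) :
    (fun w => excess k γ (f i) (pump A B C (m + 1) ++ w) - excess k γ (f i) (pump A B C 1 ++ w)
        - (∑ p ∈ Finset.range m, (k : ℝ) ^ ((p + 1) * B.length)) *
          (excess k γ (f i) (pump A B C 1 ++ w) - excess k γ (f i) (pump A B C 0 ++ w)))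
      =o[wordFilter k a j] fun w => (k : ℝ) ^ w.length := by
  set D := excessGap k γ (f i) (A ++ B) A
  have hD : IsQuasiGeometric k a D :=
    hδ.isQuasiGeometric_excessGap hk hpow γ (List.forall_mem_append.2 ⟨hA, hB⟩) hA
  have hterm : ∀ p, (fun w : List ℕ => D (w.length + (p + 1) * B.length + C.length) -
      (k : ℝ) ^ ((p + 1) * B.length) * D (w.length + C.length)) =o[wordFilter k a j]
        fun w => (k : ℝ) ^ w.length := fun p =>
    ((hD.of_dvd (hlen.mul_left (p + 1))).comp_add_right C.length).comp_tendsto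
      (tendsto_length_wordFilter k a j)
  refine (IsLittleO.fun_sum fun p (_ : p ∈ Finset.range m) => hterm p).congr' ?_ .rfl
  filter_upwards [eventually_forall_mem_lt_wordFilter k a j] with w hw
  have hfirst := hδ.excess_pump_succ_sub hk γ hA hB hC hAB 0 hw
  rw [zero_mul, add_zero, zero_add] at hfirst
  rw [hδ.excess_pump_succ_sub_pump_one hk γ hA hB hC hAB m hw, hfirst, Finset.sum_sub_distrib,
    Finset.sum_mul]

end Growth

end IsTransition

theorem gamma_pump_many_general {σ : Type*} [Finite σ] {k a j : ℕ} (hk : 2 ≤ k) (hj : j < a)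
    {f : σ → List ℕ → ℚ} {δ : σ → ℕ → σ} (hδ : IsTransition k f δ) (i : σ)
    {s : ℕ → ℚ} (hs : ∀ n, s n = sWord k (f i) ((Nat.digits k n).reverse))
    {γ : ℝ} (hγ : γ = limsup (fun n : ℕ => (s n : ℝ) / n) atTop)
    (hpow : ∀ i, IsQuasiGeometric k a fun n => (sWord k (f i) (Nat.digits k (k ^ n)).reverse : ℝ))
    {A B C : List ℕ} (hAne : A ≠ []) (hAlead : A.head? ≠ some 0)
    (hA : ∀ x ∈ A, x < k) (hB : ∀ x ∈ B, x < k) (hC : ∀ x ∈ C, x < k)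
    (hlen : a ∣ B.length) (hAB : A.foldl δ i = (A ++ B).foldl δ i)
    (hgam : gammaJ k a j s (A ++ B ++ C) = γ) {m : ℕ} (hm : 1 ≤ m) :
    gammaJ k a j s (A ++ (List.replicate m B).flatten ++ C) = γ := by
  obtain ⟨m, rfl⟩ := Nat.exists_eq_add_of_le' hm
  obtain ⟨M, hM⟩ := hδ.exists_abs_div_le hk hs
  have hpos : ∀ p, 0 < wordVal k (pump A B C p) :=
    wordVal_pump_pos (by omega) (wordVal_pos (by omega) hAne hAlead) B C
  have hle : ∀ p, gammaJ k a j s (pump A B C p) ≤ γ := fun p =>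
    hγ ▸ gammaJ_le_limsup hk hj hM (hpos p)
  refine (hle (m + 1)).antisymm ((le_gammaJ_iff hk hj hM (hpos _)).2 fun ε hε => ?_)
  have hge : γ ≤ gammaJ k a j s (pump A B C 1) := by simpa [pump] using hgam.ge
  refine frequently_neg_mul_le_of_isLittleO
    (K := ∑ p ∈ Finset.range m, (k : ℝ) ^ ((p + 1) * B.length)) (by positivity)
    (.of_forall fun w => by positivity)
    (fun η hη => eventually_sub_mul_wordVal_le hk hM (hpos 0) (hle 0) hη)
    ((le_gammaJ_iff hk hj hM (hpos 1)).1 hge) ?_ hε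
  refine (hδ.isLittleO_excess_pump hk hpow γ hA hB hC hlen hAB m j).congr' ?_ .rfl
  filter_upwards [eventually_forall_mem_lt_wordFilter k a j] with w hw
  have hexcess : ∀ p, excess k γ (f i) (pump A B C p ++ w) =
      s (wordVal k (pump A B C p ++ w)) - γ * wordVal k (pump A B C p ++ w) := fun p =>
    excess_eq_sub_mul_wordVal hk hs γ
      (List.forall_mem_append.2 ⟨forall_mem_pump_lt hA hB hC p, hw⟩)
      (head?_pump_append hAne B C w p ▸ hAlead)
  rw [hexcess, hexcess, hexcess]

theorem gamma_pump_many
    (k d a : ℕ) (hk : 2 ≤ k) (hd : 0 < d) (ha : 1 ≤ a)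
    (f : Fin d → List ℕ → ℚ) (δ : Fin d → ℕ → Fin d)
    (hnn : ∀ i w, 0 ≤ f i w)
    (hzero : ∀ w, f ⟨0, hd⟩ (0 :: w) = f ⟨0, hd⟩ w)
    (hδ : ∀ i : Fin d, ∀ x < k, ∀ w, f i (x :: w) = f (δ i x) w)
    (s : ℕ → ℚ) (hs : ∀ n, s n = sWord k (f ⟨0, hd⟩) ((Nat.digits k n).reverse))
    (γ : ℝ) (hγdef : γ = Filter.atTop.limsup (fun n : ℕ => (s n : ℝ) / n)) (hγ : 0 < γ)
    (hperron : ∃ (β C₀ : ℝ), 0 < β ∧ β < (k : ℝ) ∧ 0 < C₀ ∧ ∃ c : Fin d → ℕ → ℚ,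
      ∀ i : Fin d, ∀ j < a, ∀ n : ℕ,
        |(sWord k (f i) ((Nat.digits k (k ^ (a * n + j))).reverse) : ℝ) -
            (c i j : ℝ) * (k : ℝ) ^ (a * n + j)| ≤ C₀ * β ^ (a * n))
    (j : ℕ) (hj : j < a)
    (A B C : List ℕ)
    (hAne : A ≠ []) (hBne : B ≠ []) (hCne : C ≠ [])
    (hAdig : ∀ x ∈ A, x < k) (hBdig : ∀ x ∈ B, x < k) (hCdig : ∀ x ∈ C, x < k)
    (hAlen : a ∣ A.length) (hBlen : a ∣ B.length) (hClen : a ∣ C.length)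
    (hAlead : A.head? ≠ some 0)
    (hδA : A.foldl δ ⟨0, hd⟩ = (A ++ B).foldl δ ⟨0, hd⟩)
    (hδAB : (A ++ B).foldl δ ⟨0, hd⟩ = (A ++ B ++ C).foldl δ ⟨0, hd⟩)
    (hgam : gammaJ k a j s (A ++ B ++ C) = γ) :
    ∀ m : ℕ, 1 ≤ m → gammaJ k a j s (A ++ (List.replicate m B).flatten ++ C) = γ := by
  obtain ⟨β, C₀, hβ, hβk, -, c, hc⟩ := hperron
  exact fun m hm => gamma_pump_many_general hk hj hδ ⟨0, hd⟩ hs hγdef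
    (fun i => isQuasiGeometric_of_abs_sub_le ha (by exact_mod_cast hk) hβ.le hβk (hc i))
    hAne hAlead hAdig hBdig hCdig hBlen hδA hgam hm
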